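/- Let ρ be a run of a level-2 collapsible pushdown system starting in a stack s with topmost word w=TOP₂(s). Then ρ is a return from s to Pop₂(s) that does not pass Pop₁(s) if and only if ρ ∈ Runs(s,Pop₂(s)) and there is a uniquely determined sequence 0=j₀ ≤ i₁ < j₁ ≤ i₂ < j₂ ≤ ⋯ ≤ i_n < j_n ≤ i_{n+1} = length(ρ)−1 such that: (1) s ⊑ ρ↾[j_{k−1},i_k] for all 1≤k≤n+1; (2) for each 1≤k≤n there is a stack s_k with TOP₂(s_k)=Pop₁(w) such that ρ↾[i_k+1,j_k] is a return from s_k to Pop₂(s_k); (3) for all 1≤k≤n, TOP₂(ρ(i_k))=w and the operation at i_k is a Pop₁ or a Collapse of level 1; (4) either w is a proper word-prefix of TOP₂(ρ(i_{n+1})) and the operation at i_{n+1} is a Collapse of level 2, or w is a word-prefix of TOP₂(ρ(i_{n+1})) and the operation at i_{n+1} is Pop₂. -/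

import Mathlib

namespace CPG

/-! ## Level-2 collapsible pushdown stacks -/

/-- Stack letters: `Sum.inl σ` is a letter with a level-1 link,
`Sum.inr (σ, k)` is a letter with a level-2 link to the substack of width `k`. -/
abbrev Letter (A : Type) := A ⊕ (A × ℕ)

def symOf {A : Type} : Letter A → A
  | Sum.inl a => a
  | Sum.inr (a, _) => a

def lvlOf {A : Type} : Letter A → ℕ
  | Sum.inl _ => 1
  | Sum.inr _ => 2

abbrev Word (A : Type) := List (Letter A)

/-- A 2-word: a list of words; the last word is the topmost one. -/
abbrev Stack2 (A : Type) := List (Word A)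

/-- The initial level-2 stack `⊥₂`. -/
def bottom2 {A : Type} (bot : A) : Stack2 A := [[Sum.inl bot]]

def top2 {A : Type} (s : Stack2 A) : Option (Word A) := s.getLast?

def top1 {A : Type} (s : Stack2 A) : Option (Letter A) := s.getLast?.bind List.getLast?

def symS {A : Type} (s : Stack2 A) : Option A := (top1 s).map symOf

def lvlS {A : Type} (s : Stack2 A) : Option ℕ := (top1 s).map lvlOf

def lnkS {A : Type} (s : Stack2 A) : Option ℕ :=
  match top1 s, top2 s with
  | some (Sum.inr (_, j)), _ => some j
  | some (Sum.inl _), some w => some (w.length - 1)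
  | _, _ => none

def clone2 {A : Type} (s : Stack2 A) : Option (Stack2 A) :=
  (top2 s).map fun w => s ++ [w]

def push1 {A : Type} [DecidableEq A] (bot a : A) (s : Stack2 A) : Option (Stack2 A) :=
  if a = bot then none else (top2 s).map fun w => s.dropLast ++ [w ++ [Sum.inl a]]

def push2 {A : Type} [DecidableEq A] (bot a : A) (s : Stack2 A) : Option (Stack2 A) :=
  if a = bot then none else
    (top2 s).map fun w => s.dropLast ++ [w ++ [Sum.inr (a, s.length - 1)]]

def pop2 {A : Type} (s : Stack2 A) : Option (Stack2 A) :=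
  if 1 < s.length then some s.dropLast else none

def pop1 {A : Type} (s : Stack2 A) : Option (Stack2 A) :=
  match s.getLast? with
  | some w => if 1 < w.length then some (s.dropLast ++ [w.dropLast]) else none
  | none => none

def collapse {A : Type} (s : Stack2 A) : Option (Stack2 A) :=
  match top1 s with
  | some (Sum.inr (_, k)) => if 0 < k then some (s.take k) else none
  | some (Sum.inl _) => pop1 s
  | none => none

/-- The level-2 stack operations. -/
inductive Op (A : Type) where
  | clone2 | pop1 | pop2 | collapse
  | push1 (a : A) | push2 (a : A)

def applyOp {A : Type} [DecidableEq A] (bot : A) : Op A → Stack2 A → Option (Stack2 A)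
  | .clone2 => clone2
  | .pop1 => pop1
  | .pop2 => pop2
  | .collapse => collapse
  | .push1 a => push1 bot a
  | .push2 a => push2 bot a

/-- `Stacks(Σ)` : the smallest set containing `⊥₂` and closed under the operations. -/
inductive IsStack {A : Type} [DecidableEq A] (bot : A) : Stack2 A → Prop where
  | base : IsStack bot (bottom2 bot)
  | step {s t : Stack2 A} (op : Op A) : IsStack bot s → applyOp bot op s = some t →
      IsStack bot t

/-- Iterated application of a partial stack operation. -/
def iter {A : Type} (f : Stack2 A → Option (Stack2 A)) : ℕ → Stack2 A → Option (Stack2 A)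
  | 0, s => some s
  | n + 1, s => (f s).bind (iter f n)

/-- `t` is a substack of `s`: `t = Pop₁ⁿ(Pop₂ᵐ(s))`. -/
def Substack {A : Type} (t s : Stack2 A) : Prop :=
  ∃ n m, (iter pop2 m s).bind (iter pop1 n) = some t

def ProperSubstack {A : Type} (t s : Stack2 A) : Prop := Substack t s ∧ t ≠ s

/-- `s` is a prefix of `t` (`s ⊑ t`). -/
def StackPrefix {A : Type} (s t : Stack2 A) : Prop :=
  s ≠ [] ∧ s.length ≤ t.length ∧ s.dropLast <+: t ∧
    ∀ j, s.length - 1 ≤ j → j < t.length → s.getLastD [] <+: t.getD j []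

/-- `t[s/u]` : the stack obtained from `t` by replacing the prefix `s` by `u`. -/
def substPrefix {A : Type} (t s u : Stack2 A) : Stack2 A :=
  u.dropLast ++
    (t.drop (s.length - 1)).map fun v => u.getLastD [] ++ v.drop (s.getLastD []).length

/-! ## Collapsible pushdown systems and runs -/

/-- A level-2 collapsible pushdown system. -/
structure CPS (Q A Γ : Type) where
  bot : A
  q0 : Q
  Δ : Set (Q × A × Γ × Q × Op A)

variable {Q A Γ : Type} [DecidableEq A]

/-- A `γ`-labelled transition realized by the operation `op`. -/
def TransOp (S : CPS Q A Γ) (γ : Γ) (op : Op A) (c c' : Q × Stack2 A) : Prop :=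
  ∃ σ : A, symS c.2 = some σ ∧ (c.1, σ, γ, c'.1, op) ∈ S.Δ ∧
    applyOp S.bot op c.2 = some c'.2

def Trans (S : CPS Q A Γ) (γ : Γ) (c c' : Q × Stack2 A) : Prop :=
  ∃ op, TransOp S γ op c c'

/-- A run of a collapsible pushdown system (recording configurations, labels and
operations of each step). -/
structure Run (S : CPS Q A Γ) where
  len : ℕ
  cfg : ℕ → Q × Stack2 A
  lab : ℕ → Γ
  op : ℕ → Op A
  ok : ∀ i, i < len → TransOp S (lab i) (op i) (cfg i) (cfg (i + 1))

def Run.stk {S : CPS Q A Γ} (ρ : Run S) (i : ℕ) : Stack2 A := (ρ.cfg i).2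

/-- The word of labels along a run. -/
def Run.labels {S : CPS Q A Γ} (ρ : Run S) : List Γ :=
  List.ofFn fun i : Fin ρ.len => ρ.lab i

/-- `Reach_L`-reachability: a run from `c` to `c'` labelled by a word in `L`. -/
def ReachL (S : CPS Q A Γ) (L : Language Γ) (c c' : Q × Stack2 A) : Prop :=
  ∃ ρ : Run S, ρ.cfg 0 = c ∧ ρ.cfg ρ.len = c' ∧ ρ.labels ∈ L

/-- Plain reachability. -/
def Reach (S : CPS Q A Γ) (c c' : Q × Stack2 A) : Prop :=
  ∃ ρ : Run S, ρ.cfg 0 = c ∧ ρ.cfg ρ.len = c'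

/-! ## ε-contraction -/

def oneLetterLang (γ : Γ) : Language Γ := {[γ]}

def nonEpsLang (eps : Γ) : Language Γ := {w | ∃ γ : Γ, γ ≠ eps ∧ w = [γ]}

/-- The language `{ε}*`. -/
def epsStar (eps : Γ) : Language Γ := KStar.kstar (oneLetterLang eps)

/-- The language `({ε}*(Γ∖{ε}))*`. -/
def domLang (eps : Γ) : Language Γ :=
  KStar.kstar (epsStar eps * nonEpsLang eps)

/-- The language `{ε}*γ`. -/
def edgeLang (eps γ : Γ) : Language Γ := epsStar eps * oneLetterLang γ

/-- The vertex set of the ε-contraction `G/ε`. -/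
def EpsDomain (S : CPS Q A Γ) (eps : Γ) : Set (Q × Stack2 A) :=
  {c | ReachL S (domLang eps) (S.q0, bottom2 S.bot) c}

/-! ## (Generalised) milestones and the order ≪ -/

/-- `wordAt bot s i` is the word `wᵢ` of `s`, with the convention `w₀ = ⊥`. -/
def wordAt {A : Type} (bot : A) (s : Stack2 A) (i : ℕ) : Word A :=
  if i = 0 then [Sum.inl bot] else s.getD (i - 1) []

/-- Longest common prefix of two words. -/
def lcp {α : Type} [DecidableEq α] : List α → List α → List α
  | a :: s, b :: t => if a = b then a :: lcp s t else []
  | _, _ => []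

/-- `m` is a generalised milestone of `s`. -/
def GenMilestone (bot : A) (s m : Stack2 A) : Prop :=
  ∃ i v, i < s.length ∧ m = s.take i ++ [v] ∧
    lcp (wordAt bot s i) (wordAt bot s (i + 1)) <+: v ∧
    (v <+: wordAt bot s i ∨ v <+: wordAt bot s (i + 1))

/-- `m` is a milestone of `s`. -/
def Milestone (bot : A) (s m : Stack2 A) : Prop :=
  ∃ i v, i < s.length ∧ m = s.take i ++ [v] ∧
    lcp (wordAt bot s i) (wordAt bot s (i + 1)) <+: v ∧
    v <+: wordAt bot s (i + 1)

def genMilestones (bot : A) (s : Stack2 A) : Set (Stack2 A) := {m | GenMilestone bot s m}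

def milestones (bot : A) (s : Stack2 A) : Set (Stack2 A) := {m | Milestone bot s m}

/-- The base cases of the partial order `≪`. -/
def llBase (bot : A) (s t : Stack2 A) : Prop :=
  s.length < t.length ∨
    (s ≠ [] ∧ s.length = t.length ∧ s.dropLast = t.dropLast ∧
      ((t.getLastD [] <+: s.getLastD [] ∧ t.getLastD [] ≠ s.getLastD [] ∧
          s.getLastD [] <+: wordAt bot s (s.length - 1)) ∨
        (s.getLastD [] <+: t.getLastD [] ∧ s.getLastD [] ≠ t.getLastD [] ∧
          ¬ t.getLastD [] <+: wordAt bot s (s.length - 1))))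

/-- The order `≪`: the smallest reflexive transitive relation containing `llBase`. -/
def ll (bot : A) : Stack2 A → Stack2 A → Prop := Relation.ReflTransGen (llBase bot)

/-- `m'` is the ≪-successor of `m` within `genMilestones bot s`. -/
def LlSuccessor (bot : A) (s m m' : Stack2 A) : Prop :=
  GenMilestone bot s m ∧ GenMilestone bot s m' ∧ m ≠ m' ∧ ll bot m m' ∧
    ∀ m'', GenMilestone bot s m'' → ll bot m m'' → m'' ≠ m → ll bot m' m''

/-! ## Loops, returns and 1-loops -/

/-- The segment `[i,j]` of `ρ` is a loop (of its initial stack). -/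
def LoopSeg {S : CPS Q A Γ} (ρ : Run S) (i j : ℕ) : Prop :=
  i ≤ j ∧ j ≤ ρ.len ∧ ρ.stk j = ρ.stk i ∧
    (∀ k, i ≤ k → k ≤ j → ∀ t, pop2 (ρ.stk i) = some t → ¬ Substack (ρ.stk k) t) ∧
    (∀ k, i ≤ k → k ≤ j → ∀ m, 0 < m → ∀ t, iter pop1 m (ρ.stk i) = some t →
      ρ.stk k = t → ∀ m', m' < m → ∃ t', iter pop1 m' (ρ.stk i) = some t' ∧
        lvlS t' = some 1)

/-- A high loop: a loop that never visits `Pop₁` of its stack. -/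
def HighLoopSeg {S : CPS Q A Γ} (ρ : Run S) (i j : ℕ) : Prop :=
  LoopSeg ρ i j ∧ ∀ k, i ≤ k → k ≤ j → ∀ t, pop1 (ρ.stk i) = some t → ρ.stk k ≠ t

/-- A low loop: a loop whose second and second-to-last stacks are `Pop₁` of its stack. -/
def LowLoopSeg {S : CPS Q A Γ} (ρ : Run S) (i j : ℕ) : Prop :=
  LoopSeg ρ i j ∧ i < j ∧
    ∃ t, pop1 (ρ.stk i) = some t ∧ ρ.stk (i + 1) = t ∧ ρ.stk (j - 1) = t

/-- The common part of the definition of a return on the segment `[i,j]`: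
it leads from its initial stack `t` to `Pop₂(t)` and never visits a substack
of `Pop₂(t)` before its final configuration. -/
def RetShell {S : CPS Q A Γ} (ρ : Run S) (i j : ℕ) : Prop :=
  i < j ∧ j ≤ ρ.len ∧ pop2 (ρ.stk i) = some (ρ.stk j) ∧
    ∀ k, i ≤ k → k < j → ¬ Substack (ρ.stk k) (ρ.stk j)

/-- The segment `[i,j]` of `ρ` is a return (from its initial stack `t` to `Pop₂(t)`). -/
inductive RetSeg {S : CPS Q A Γ} (ρ : Run S) : ℕ → ℕ → Prop where
  | pop2 {i j : ℕ} (h : RetShell ρ i j) (hop : ρ.op (j - 1) = Op.pop2) : RetSeg ρ i j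
  | collapse {i j : ℕ} (h : RetShell ρ i j) (hop : ρ.op (j - 1) = Op.collapse)
      (hpre : ∃ w w', top2 (ρ.stk i) = some w ∧ top2 (ρ.stk (j - 1)) = some w' ∧
        w <+: w' ∧ w ≠ w') : RetSeg ρ i j
  | sub {i k j : ℕ} (h : RetShell ρ i j) (hik : i < k) (hkj : k ≤ j)
      (hpop : pop1 (ρ.stk i) = some (ρ.stk k)) (hret : RetSeg ρ k j) : RetSeg ρ i j

/-- The segment `[i,j]` of `ρ` is a level-1-loop. -/
def OneLoopSeg {S : CPS Q A Γ} (ρ : Run S) (i j : ℕ) : Prop :=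
  i ≤ j ∧ j ≤ ρ.len ∧
    ∃ (s : Stack2 A) (w : Word A) (s' : Stack2 A),
      ρ.stk i = s ++ [w] ∧ ρ.stk j = s ++ s' ++ [w] ∧
      (∀ k, i ≤ k → k ≤ j → s.length < (ρ.stk k).length) ∧
      (∀ k, i ≤ k → k ≤ j → 1 < w.length → top2 (ρ.stk k) = some w.dropLast →
        ∃ m, k < m ∧ m ≤ j ∧ RetSeg ρ k m)

/-! ## ExRet, ExLoop, ... -/

/-- `w↓₀` : replace every level-2 link by `0`. -/
def down0 {A : Type} : Word A → Word A :=
  List.map fun a => match a with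
    | Sum.inl x => Sum.inl x
    | Sum.inr (x, _) => Sum.inr (x, 0)

def ExRet (S : CPS Q A Γ) (w : Word A) : Set (Q × Q) :=
  {p | ∃ ρ : Run S, ρ.cfg 0 = (p.1, [down0 w, down0 w]) ∧
    ρ.cfg ρ.len = (p.2, [down0 w]) ∧ RetSeg ρ 0 ρ.len}

def ExLoop (S : CPS Q A Γ) (w : Word A) : Set (Q × Q) :=
  {p | ∃ ρ : Run S, ρ.cfg 0 = (p.1, [down0 w]) ∧ ρ.cfg ρ.len = (p.2, [down0 w]) ∧
    LoopSeg ρ 0 ρ.len}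

def ExHLoop (S : CPS Q A Γ) (w : Word A) : Set (Q × Q) :=
  {p | ∃ ρ : Run S, ρ.cfg 0 = (p.1, [down0 w]) ∧ ρ.cfg ρ.len = (p.2, [down0 w]) ∧
    HighLoopSeg ρ 0 ρ.len}

def ExLLoop (S : CPS Q A Γ) (w : Word A) : Set (Q × Q) :=
  {p | ∃ ρ : Run S, ρ.cfg 0 = (p.1, [down0 w]) ∧ ρ.cfg ρ.len = (p.2, [down0 w]) ∧
    LowLoopSeg ρ 0 ρ.len}

def ExOneLoop (S : CPS Q A Γ) (w : Word A) : Set (Q × Q) :=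
  {p | ∃ (ρ : Run S) (s' : Stack2 A), ρ.cfg 0 = (p.1, [down0 w]) ∧
    ρ.cfg ρ.len = (p.2, s' ++ [down0 w]) ∧ OneLoopSeg ρ 0 ρ.len}

/-! ## Finite binary trees -/

/-- Finite binary trees with labels in `α` and optional left/right children. -/
inductive PTree (α : Type) where
  | node (a : α) (l r : Option (PTree α)) : PTree α

/-- The label of the node at address `d` (`false` = left/0, `true` = right/1). -/
def PTree.labelAt {α : Type} : PTree α → List Bool → Option α
  | .node a _ _, [] => some a
  | .node _ (some t) _, false :: d => t.labelAt d
  | .node _ none _, false :: _ => none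
  | .node _ _ (some t), true :: d => t.labelAt d
  | .node _ _ none, true :: _ => none

def PTree.map {α β : Type} (f : α → β) : PTree α → PTree β
  | .node a l r =>
    .node (f a)
      (match l with | none => none | some t => some (t.map f))
      (match r with | none => none | some t => some (t.map f))

/-- Convolution of two trees, with `none` as padding symbol `□`. -/
def PTree.conv {α β : Type} : PTree α → PTree β → PTree (Option α × Option β)
  | .node a l r, .node b l' r' =>
    .node (some a, some b)
      (match l, l' with
        | none, none => none
        | some t, none => some (t.map fun x => (some x, none))
        | none, some u => some (u.map fun x => (none, some x))
        | some t, some u => some (PTree.conv t u))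
      (match r, r' with
        | none, none => none
        | some t, none => some (t.map fun x => (some x, none))
        | none, some u => some (u.map fun x => (none, some x))
        | some t, some u => some (PTree.conv t u))

/-- A (bottom-up nondeterministic) finite tree automaton. -/
structure TreeAut (α : Type) where
  St : Type
  fin : Finite St
  qI : St
  F : Set St
  Δ : Set (St × α × St × St)

/-- Acceptance of a finite tree by a tree automaton. -/
def TreeAut.Accepts {α : Type} (M : TreeAut α) (t : PTree α) : Prop :=
  ∃ ρ : List Bool → M.St,
    (∀ d, t.labelAt d = none → ρ d = M.qI) ∧
    (∀ d a, t.labelAt d = some a → (ρ d, a, ρ (d ++ [false]), ρ (d ++ [true])) ∈ M.Δ) ∧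
    ρ [] ∈ M.F

/-- A family of binary relations on `B` is tree-automatic. -/
def IsTreeAutomatic {B : Type} {I : Type} (E : I → B → B → Prop) : Prop :=
  ∃ (α : Type) (_ : Finite α) (AB : TreeAut α) (AE : I → TreeAut (Option α × Option α))
    (f : {t : PTree α // AB.Accepts t} → B),
    Function.Bijective f ∧
      ∀ (i : I) (t₁ t₂ : {t : PTree α // AB.Accepts t}),
        (AE i).Accepts (PTree.conv t₁.1 t₂.1) ↔ E i (f t₁) (f t₂)

/-! ## The encoding of configurations as trees -/

/-- Labels of encoding trees: a state, a pair (symbol, link level), or `ε`. -/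
abbrev EncLabel (Q A : Type) := Q ⊕ ((A × ℕ) ⊕ Unit)

def epsLab {Q A : Type} : EncLabel Q A := Sum.inr (Sum.inr ())

def symLab {Q A : Type} (τ : Letter A) : EncLabel Q A := Sum.inr (Sum.inl (symOf τ, lvlOf τ))

/-- Encoding of blocklines as trees (with a fuel parameter driving the recursion;
the fuel used in `encStack` is large enough so that it never runs out on actual
blocklines). The left subtree encodes the blockline induced by the first maximal
block, the right subtree the remaining blocks. -/
def encBL (Q : Type) {A : Type} [DecidableEq A] :
    ℕ → EncLabel Q A → List (Word A) → PTree (EncLabel Q A)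
  | 0, σ, _ => .node σ none none
  | _ + 1, σ, [] => .node σ none none
  | fuel + 1, σ, w :: rest =>
    if w.length ≤ 1 then
      match rest with
      | [] => .node σ none none
      | _ :: _ => .node σ none (some (encBL Q fuel epsLab rest))
    else
      let p : Word A → Bool := fun v => decide (v.take 2 = w.take 2)
      let blk := (w :: rest).takeWhile p
      let restBlk := (w :: rest).dropWhile p
      .node σ
        (some (encBL Q fuel
          (match w[1]? with | some τ' => symLab τ' | none => epsLab)
          (blk.map List.tail)))
        (match restBlk with
          | [] => none
          | _ :: _ => some (encBL Q fuel epsLab restBlk))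

/-- The total number of letters of a 2-word. -/
def size2 {A : Type} (s : Stack2 A) : ℕ := (s.map List.length).sum

/-- The encoding `Enc(s) = Enc(s, (⊥,1))` of a stack. -/
def encStack (Q : Type) {A : Type} [DecidableEq A] (bot : A) (s : Stack2 A) :
    PTree (EncLabel Q A) :=
  encBL Q (size2 s + 1) (Sum.inr (Sum.inl (bot, 1))) s

/-- The encoding of a configuration: the state at the root, `Enc(s)` as left subtree. -/
def Enc {Q A : Type} [DecidableEq A] (bot : A) (c : Q × Stack2 A) : PTree (EncLabel Q A) :=
  .node (Sum.inl c.1) (some (encStack Q bot c.2)) none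

/-- The class `EncTrees` of encoding trees. -/
def EncTrees (Q A : Type) (bot : A) : Set (PTree (EncLabel Q A)) :=
  {T | (∃ q : Q, T.labelAt [] = some (Sum.inl q)) ∧
    T.labelAt [true] = none ∧ T.labelAt [false] ≠ none ∧
    T.labelAt [false] = some (Sum.inr (Sum.inl (bot, 1))) ∧
    (∀ (d : List Bool) (x : EncLabel Q A),
      T.labelAt (false :: (d ++ [false])) = some x →
        ∃ (σ : A) (l : ℕ), σ ≠ bot ∧ (l = 1 ∨ l = 2) ∧ x = Sum.inr (Sum.inl (σ, l))) ∧
    (∀ (d : List Bool) (x : EncLabel Q A), T.labelAt (d ++ [true]) = some x → x = epsLab) ∧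
    (∀ (d : List Bool) (σ : A), ¬ (T.labelAt (d ++ [false]) = some (Sum.inr (Sum.inl (σ, 1))) ∧
      T.labelAt (d ++ [true, false]) = some (Sum.inr (Sum.inl (σ, 1)))))}

/-- Restriction of a tree to the nodes lexicographically ≤ `d`. -/
def restrictLex {α : Type} : PTree α → List Bool → PTree α
  | .node a _ _, [] => .node a none none
  | .node a l _, false :: d =>
      .node a (match l with | none => none | some t => some (restrictLex t d)) none
  | .node a l r, true :: d =>
      .node a l (match r with | none => none | some t => some (restrictLex t d))

/-- The lexicographic order on tree addresses. -/
def lexLe (d e : List Bool) : Prop :=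
  d <+: e ∨ ∃ (c x y : List Bool), d = c ++ false :: x ∧ e = c ++ true :: y

/-! ## Deterministic finite automata with output (Moore machines) -/

structure Moore (α ω : Type) where
  St : Type
  fin : Finite St
  init : St
  step : St → α → St
  out : St → ω

def Moore.output {α ω : Type} (M : Moore α ω) (w : List α) : ω :=
  M.out (w.foldl M.step M.init)

/-- The decomposition `0 = j₀ ≤ i₁ < j₁ ≤ ⋯ ≤ i_n < j_n ≤ i_{n+1} = length(ρ)−1`
of a return which does not pass `Pop₁` of its initial stack. -/
def RetDecomp {Q A Γ : Type} [DecidableEq A] {S : CPS Q A Γ} (ρ : Run S)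
    (n : ℕ) (ii jj : ℕ → ℕ) : Prop :=
  jj 0 = 0 ∧ ii (n + 1) = ρ.len - 1 ∧
  (∀ k, 1 ≤ k → k ≤ n → jj (k - 1) ≤ ii k ∧ ii k < jj k) ∧
  jj n ≤ ii (n + 1) ∧
  (∀ k, 1 ≤ k → k ≤ n + 1 → ∀ m, jj (k - 1) ≤ m → m ≤ ii k →
    StackPrefix (ρ.stk 0) (ρ.stk m)) ∧
  (∀ k, 1 ≤ k → k ≤ n → ∀ w : Word A, top2 (ρ.stk 0) = some w →
    1 < w.length ∧ top2 (ρ.stk (ii k + 1)) = some w.dropLast ∧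
      RetSeg ρ (ii k + 1) (jj k)) ∧
  (∀ k, 1 ≤ k → k ≤ n → top2 (ρ.stk (ii k)) = top2 (ρ.stk 0) ∧
    (ρ.op (ii k) = Op.pop1 ∨
      (ρ.op (ii k) = Op.collapse ∧ lvlS (ρ.stk (ii k)) = some 1))) ∧
  (∀ w : Word A, top2 (ρ.stk 0) = some w →
    ((∃ w', top2 (ρ.stk (ρ.len - 1)) = some w' ∧ w <+: w' ∧ w ≠ w' ∧
        ρ.op (ρ.len - 1) = Op.collapse ∧ lvlS (ρ.stk (ρ.len - 1)) = some 2) ∨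
      (∃ w', top2 (ρ.stk (ρ.len - 1)) = some w' ∧ w <+: w' ∧
        ρ.op (ρ.len - 1) = Op.pop2)))

/-! ## Helper lemmas for the proof -/

theorem step_cases (bot : A) (op : Op A) (s0 : Stack2 A) (w : Word A) (u : Stack2 A)
    (h : applyOp bot op (s0 ++ [w]) = some u) :
    (op = Op.clone2 ∧ u = s0 ++ [w] ++ [w]) ∨
    (∃ a, u = s0 ++ [w ++ [Sum.inl a]]) ∨
    (∃ a, u = s0 ++ [w ++ [Sum.inr (a, s0.length)]]) ∨
    (1 < w.length ∧ u = s0 ++ [w.dropLast] ∧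
      (op = Op.pop1 ∨ (op = Op.collapse ∧ lvlS (s0 ++ [w]) = some 1))) ∨
    (op = Op.pop2 ∧ s0 ≠ [] ∧ u = s0) ∨
    (op = Op.collapse ∧ lvlS (s0 ++ [w]) = some 2 ∧
      ∃ y a k, w = y ++ [Sum.inr (a, k)] ∧ 0 < k ∧ u = (s0 ++ [w]).take k) := by
  cases op with
  | clone2 => simp [applyOp, clone2, top2] at h; left; simp [← h]
  | pop1 =>
    simp [applyOp, pop1] at h
    right; right; right; left
    exact ⟨h.1, h.2.symm, Or.inl rfl⟩
  | pop2 =>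
    simp [applyOp, pop2] at h
    right; right; right; right; left
    refine ⟨rfl, ?_, h.2.symm⟩
    rintro rfl; simp at h
  | collapse =>
    rcases List.eq_nil_or_concat w with rfl | ⟨y, l, rfl⟩
    · simp [applyOp, collapse, top1] at h
    · rcases l with a | ⟨a, k⟩
      · simp [applyOp, collapse, top1, pop1] at h
        right; right; right; left
        refine ⟨by simpa using h.1, by simpa using h.2.symm, Or.inr ⟨rfl, ?_⟩⟩
        simp [lvlS, top1, lvlOf]
      · simp [applyOp, collapse, top1] at h
        right; right; right; right; right
        refine ⟨rfl, by simp [lvlS, top1, lvlOf], y, a, k, by simp, h.1, by simpa using h.2.symm⟩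
  | push1 a =>
    simp [applyOp, push1, top2] at h
    right; left; exact ⟨a, h.2.symm⟩
  | push2 a =>
    simp [applyOp, push2, top2] at h
    right; right; left; exact ⟨a, h.2.symm⟩

theorem prefix_dropLast_of_ne {α : Type} {p x : List α} (h : p <+: x) (hne : x ≠ p) :
    p <+: x.dropLast := by
  obtain ⟨q, rfl⟩ := h
  rcases List.eq_nil_or_concat q with rfl | ⟨q', l, rfl⟩
  · simp at hne
  · simp [← List.append_assoc]

theorem stackPrefix_iff (t : Stack2 A) (w : Word A) (u : Stack2 A) :
    StackPrefix (t ++ [w]) u ↔ ∃ r, r ≠ [] ∧ u = t ++ r ∧ ∀ x ∈ r, w <+: x := by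
  constructor
  · rintro ⟨-, h1, h2, h3⟩
    simp at h1 h2 h3
    obtain ⟨r, rfl⟩ := h2
    refine ⟨r, ?_, rfl, ?_⟩
    · rintro rfl; simp at h1
    · intro x hx
      obtain ⟨i, hi, rfl⟩ := List.getElem_of_mem hx
      have := h3 (t.length + i) (by omega) (by simpa using hi)
      simpa [List.getElem?_append_right, hi] using this
  · rintro ⟨r, hr, rfl, h⟩
    have hl : 0 < r.length := List.length_pos_iff.2 hr
    refine ⟨by simp, by simp; omega, by simp, ?_⟩
    intro j h1 h2
    simp at h1 h2
    have hj : j - t.length < r.length := by omega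
    have := h _ (List.getElem_mem hj)
    simpa [List.getElem?_append_right, h1, hj] using this

theorem exists_top (r : Stack2 A) (h : r ≠ []) : ∃ r0 x, r = r0 ++ [x] := by
  rcases List.eq_nil_or_concat r with h' | ⟨a, b, h'⟩
  · exact absurd h' h
  · exact ⟨a, b, by simpa using h'⟩

theorem run_step {S : CPS Q A Γ} (ρ : Run S) {i : ℕ} (h : i < ρ.len) :
    applyOp S.bot (ρ.op i) (ρ.stk i) = some (ρ.stk (i + 1)) := by
  obtain ⟨σ, _, _, h⟩ := ρ.ok i h
  exact h

/-- What happens when the width drops to at most `|t|`. -/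
theorem drop_step {S : CPS Q A Γ} (ρ : Run S) {i : ℕ} (hi : i < ρ.len) (t r : Stack2 A)
    (hr : r ≠ []) (hs : ρ.stk i = t ++ r) (hd : (ρ.stk (i + 1)).length ≤ t.length) :
    (ρ.op i = Op.pop2 ∧ ρ.stk (i + 1) = t ∧ t ≠ []) ∨
    (ρ.op i = Op.collapse ∧ ∃ y a k, (y ++ [Sum.inr (a, k)]) ∈ r ∧
      top2 (ρ.stk i) = some (y ++ [Sum.inr (a, k)]) ∧ 0 < k ∧ k ≤ t.length ∧
      ρ.stk (i + 1) = t.take k) := by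
  obtain ⟨r0, x, rfl⟩ := exists_top r hr
  have h := run_step ρ hi
  rw [hs, ← List.append_assoc] at h
  rcases step_cases _ _ _ _ _ h with ⟨_, h⟩ | ⟨a, h⟩ | ⟨a, h⟩ | ⟨_, h, _⟩ | ⟨ho, h1, h⟩ |
    ⟨ho, _, y, a, k, hx, hk, h⟩
  · rw [h] at hd; simp at hd
  · rw [h] at hd; simp at hd
  · rw [h] at hd; simp at hd
  · rw [h] at hd; simp at hd
  · left
    rw [h] at hd
    simp at hd
    subst hd
    simp at h h1
    exact ⟨ho, h, h1⟩
  · right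
    rw [h] at hd
    simp at hd
    have hk' : k ≤ t.length := by omega
    refine ⟨ho, y, a, k, by simp [hx], by rw [hs]; simp [top2, hx], hk, hk', ?_⟩
    rw [h, List.append_assoc, List.take_append_of_le_length hk']

/-- The main invariant. -/
theorem run_inv {S : CPS Q A Γ} (ρ : Run S) (t : Stack2 A) (v p : Word A)
    (G : Word A → A → ℕ → Prop) (a b : ℕ) (hpv : p <+: v)
    (hgood : ∀ y x k, (y ++ [Sum.inr (x, k)]) <+: v → G y x k)
    (hpush : ∀ y x n, (n = 0 → p <+: y) → G y x (t.length + n))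
    (hstk : ρ.stk a = t ++ [v]) (hb : b ≤ ρ.len + 1)
    (hwidth : ∀ c, a ≤ c → c < b → t.length < (ρ.stk c).length)
    (hnv : 1 < p.length → ∀ c, a ≤ c → c < b → ρ.stk c ≠ t ++ [p.dropLast]) :
    ∀ c, a ≤ c → c < b → ∃ z r, ρ.stk c = t ++ z :: r ∧ p <+: z ∧
      ∀ u ∈ z :: r, ∀ y x k, (y ++ [Sum.inr (x, k)]) <+: u → G y x k := by
  intro c hac
  induction c, hac using Nat.le_induction with
  | base =>
    intro _
    refine ⟨v, [], hstk, hpv, ?_⟩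
    simpa using hgood
  | succ c hac ih =>
    intro hcb
    obtain ⟨z, r, hs, hz, hG⟩ := ih (by omega)
    have h := run_step ρ (i := c) (by omega)
    have hw := hwidth (c + 1) (by omega) hcb
    have hn := fun hp => hnv hp (c + 1) (by omega) hcb
    -- enough: a nonempty `r'` whose head is fine
    suffices hh : ∃ r', r' ≠ [] ∧ ρ.stk (c + 1) = t ++ r' ∧ (∀ q ∈ r'.head?, p <+: q) ∧
        ∀ u ∈ r', ∀ y x k, (y ++ [Sum.inr (x, k)]) <+: u → G y x k by
      obtain ⟨r', h1, h2, h3, h4⟩ := hh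
      cases r' with
      | nil => exact absurd rfl h1
      | cons z' r' => exact ⟨z', r', h2, h3 z' (by simp), h4⟩
    obtain ⟨r0, x, hrx⟩ := exists_top (z :: r) (by simp)
    rw [hrx] at hG hs
    have hhead : ∀ q, ((r0 ++ [x]).head? = some q) → p <+: q := by
      intro q hq
      rw [← hrx] at hq
      simp at hq
      exact hq ▸ hz
    have hG0 : ∀ u ∈ r0, ∀ y x k, (y ++ [Sum.inr (x, k)]) <+: u → G y x k :=
      fun u hu => hG u (by simp [hu])
    have hGx : ∀ y x' k, (y ++ [Sum.inr (x', k)]) <+: x → G y x' k := hG x (by simp)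
    rw [hs, ← List.append_assoc] at h
    -- replacing the top word
    have key : ∀ x', ρ.stk (c + 1) = t ++ r0 ++ [x'] → (r0 = [] → p <+: x') →
        (∀ y x k, (y ++ [Sum.inr (x, k)]) <+: x' → G y x k) →
        ∃ r', r' ≠ [] ∧ ρ.stk (c + 1) = t ++ r' ∧ (∀ q ∈ r'.head?, p <+: q) ∧
        ∀ u ∈ r', ∀ y x k, (y ++ [Sum.inr (x, k)]) <+: u → G y x k := by
      intro x' h1 h2 h3
      refine ⟨r0 ++ [x'], by simp, by simpa using h1, ?_, ?_⟩
      · intro q hq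
        cases r0 with
        | nil => simp at hq; subst hq; exact h2 rfl
        | cons e r0 => exact hhead q (by simpa using hq)
      · intro u hu
        rcases List.mem_append.1 hu with hu | hu
        · exact hG0 u hu
        · simp at hu; subst hu; exact h3
    have hpx : r0 = [] → p <+: x := by
      rintro rfl; exact hhead x (by simp)
    have hcut : ∀ k, ρ.stk (c + 1) = (t ++ (r0 ++ [x])).take k →
        ∃ r', r' ≠ [] ∧ ρ.stk (c + 1) = t ++ r' ∧ (∀ q ∈ r'.head?, p <+: q) ∧
        ∀ u ∈ r', ∀ y x k, (y ++ [Sum.inr (x, k)]) <+: u → G y x k := by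
      intro k hk
      rw [hk] at hw
      simp at hw
      have hkt : t.length < k := by omega
      refine ⟨(r0 ++ [x]).take (k - t.length), ?_, ?_, ?_, ?_⟩
      · intro h0
        have := congrArg List.length h0
        simp at this
        omega
      · rw [hk, List.take_append, List.take_of_length_le (by omega)]
      · intro q hq
        rw [List.head?_take] at hq
        split at hq
        · simp at hq
        · exact hhead q hq
      · intro u hu
        exact hG u (List.mem_of_mem_take hu)
    rcases step_cases _ _ _ _ _ h with ⟨_, h⟩ | ⟨e, h⟩ | ⟨e, h⟩ | ⟨h1, h, _⟩ | ⟨ho, h1, h⟩ |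
      ⟨ho, _, y, e, k, hx, hk, h⟩
    · refine ⟨r0 ++ [x] ++ [x], by simp, by simpa using h, ?_, ?_⟩
      · intro q hq
        refine hhead q ?_
        cases r0 <;> simpa using hq
      · intro u hu
        refine hG u ?_
        simpa using hu
    · refine key _ h (fun h0 => (hpx h0).trans (List.prefix_append _ _)) ?_
      intro y x' k hy
      rw [List.prefix_concat_iff] at hy
      rcases hy with hy | hy
      · simp at hy
      · exact hGx _ _ _ hy
    · refine key _ h (fun h0 => (hpx h0).trans (List.prefix_append _ _)) ?_
      intro y x' k hy
      rw [List.prefix_concat_iff] at hy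
      rcases hy with hy | hy
      · simp at hy
        obtain ⟨rfl, rfl, rfl⟩ := hy
        exact hpush _ _ _ (fun h0 => hpx (List.length_eq_zero_iff.1 h0))
      · exact hGx _ _ _ hy
    · refine key _ h ?_ (fun y x' k hy => hGx _ _ _ (hy.trans (List.dropLast_prefix x)))
      rintro rfl
      have hp := hpx rfl
      by_cases hxp : x = p
      · subst hxp
        exact absurd (by simpa using h) (hn h1)
      · exact prefix_dropLast_of_ne hp hxp
    · refine hcut (t.length + r0.length) ?_
      rw [h, ← List.append_assoc, List.take_append_of_le_length (by simp), List.take_of_length_le (by simp)]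
    · refine hcut k ?_
      rw [h, List.append_assoc]

theorem iter_pop2_length (m : ℕ) : ∀ s t : Stack2 A, iter pop2 m s = some t →
    t.length ≤ s.length := by
  induction m with
  | zero => intro s t h; simp [iter] at h; simp [h]
  | succ m ih =>
    intro s t h
    simp only [iter, pop2] at h
    split at h
    · have := ih _ _ h
      simp at this
      omega
    · simp at h

theorem iter_pop1_length (m : ℕ) : ∀ s t : Stack2 A, iter pop1 m s = some t →
    t.length ≤ s.length := by
  induction m with
  | zero => intro s t h; simp [iter] at h; simp [h]
  | succ m ih =>
    intro s t h
    rcases List.eq_nil_or_concat s with rfl | ⟨s0, w, rfl⟩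
    · simp [iter, pop1] at h
    · simp only [iter, pop1] at h
      simp at h
      split at h
      · have := ih _ _ h
        simpa using this
      · simp at h

theorem Substack.length_le {s t : Stack2 A} (h : Substack t s) : t.length ≤ s.length := by
  obtain ⟨n, m, h⟩ := h
  rw [Option.bind_eq_some_iff] at h
  obtain ⟨u, h1, h2⟩ := h
  exact (iter_pop1_length _ _ _ h2).trans (iter_pop2_length _ _ _ h1)

theorem Substack.refl (s : Stack2 A) : Substack s s := ⟨0, 0, rfl⟩

theorem iter_pop2_take (m : ℕ) : ∀ s : Stack2 A, m < s.length →
    iter pop2 m s = some (s.take (s.length - m)) := by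
  induction m with
  | zero => intro s _; simp [iter]
  | succ m ih =>
    intro s h
    rw [iter, pop2, if_pos (by omega)]
    simp only [Option.bind_some]
    rw [ih _ (by simp; omega)]
    simp [List.dropLast_eq_take, List.take_take]
    omega

theorem substack_take (t : Stack2 A) (k : ℕ) (h0 : 0 < k) (h : k ≤ t.length) :
    Substack (t.take k) t := by
  refine ⟨0, t.length - k, ?_⟩
  rw [iter_pop2_take _ _ (by omega)]
  simp [iter]
  omega

theorem pop2_eq {s t : Stack2 A} (h : pop2 s = some t) : ∃ w, s = t ++ [w] ∧ t ≠ [] := by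
  rcases List.eq_nil_or_concat s with rfl | ⟨s0, w, rfl⟩
  · simp [pop2] at h
  · simp [pop2] at h
    obtain ⟨h1, rfl⟩ := h
    exact ⟨w, by simp, by rintro rfl; simp at h1⟩

theorem shell_width {S : CPS Q A Γ} (ρ : Run S) (a b : ℕ) (h : RetShell ρ a b) :
    ∀ c, a ≤ c → c < b → (ρ.stk b).length < (ρ.stk c).length := by
  obtain ⟨hab, hb, hp, hsub⟩ := h
  obtain ⟨v, hv, hne⟩ := pop2_eq hp
  intro c
  induction c using Nat.strong_induction_on with
  | _ c ih =>
    intro hac hcb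
    rcases Nat.eq_or_lt_of_le hac with rfl | hac
    · rw [hv]; simp
    · obtain ⟨c, rfl⟩ : ∃ c', c = c' + 1 := ⟨c - 1, by omega⟩
      obtain ⟨z, r, hs, -, -⟩ := run_inv ρ (ρ.stk b) v [] (fun _ _ _ => True) a (c + 1)
        (List.nil_prefix) (by simp) (by simp) hv (by omega)
        (fun c' h1 h2 => ih c' h2 h1 (by omega)) (by simp) c (by omega) (by omega)
      by_contra hcon
      rcases drop_step ρ (i := c) (by omega) (ρ.stk b) (z :: r) (by simp) hs (by omega) with
        ⟨_, h1, _⟩ | ⟨_, y, x, k, _, _, h1, h2, h3⟩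
      · exact hsub (c + 1) (by omega) hcb (h1 ▸ Substack.refl _)
      · apply hsub (c + 1) (by omega) hcb
        rw [h3]
        exact substack_take _ _ h1 h2

theorem RetSeg.shell {S : CPS Q A Γ} {ρ : Run S} {a b : ℕ} (h : RetSeg ρ a b) :
    RetShell ρ a b := by
  cases h <;> assumption

/-- A first drop of the width is a return, if no link of the top word interferes. -/
theorem retSeg_of {S : CPS Q A Γ} (ρ : Run S) (t : Stack2 A) (b : ℕ) (hb : b ≤ ρ.len)
    (ht : t ≠ []) (hbt : ρ.stk b = t) (n : ℕ) :
    ∀ (v : Word A) (a : ℕ), v.length = n → ρ.stk a = t ++ [v] → a < b →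
      (∀ c, a ≤ c → c < b → t.length < (ρ.stk c).length) →
      (∀ x k, (Sum.inr (x, k) : Letter A) ∈ v → k < t.length) → RetSeg ρ a b := by
  induction n using Nat.strong_induction_on with
  | _ n ih =>
    intro v a hvn hstk hab hwidth hlink
    have hsh : RetShell ρ a b := by
      refine ⟨hab, hb, ?_, ?_⟩
      · have : 0 < t.length := List.length_pos_iff.2 ht
        rw [hstk, hbt, pop2, if_pos (by simp; omega)]
        simp
      · intro c h1 h2 h3
        have h4 := h3.length_le
        have h5 := hwidth c h1 h2
        rw [hbt] at h4
        omega
    by_cases hvis : 1 < v.length ∧ ∃ c, a ≤ c ∧ c < b ∧ ρ.stk c = t ++ [v.dropLast]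
    · obtain ⟨hv, c, hac, hcb, hc⟩ := hvis
      have hac' : a < c := by
        rcases Nat.eq_or_lt_of_le hac with rfl | h
        · rw [hstk] at hc
          have := congrArg List.length (List.append_cancel_left hc)
          simp at hc
          have := congrArg List.length hc
          simp at this
          omega
        · exact h
      refine RetSeg.sub hsh hac' hcb.le ?_ ?_
      · rw [hstk, hc]
        simp [pop1, hv]
      · refine ih (v.dropLast.length) (by simp; omega) _ c rfl hc hcb
          (fun c' h1 h2 => hwidth c' (by omega) h2) ?_
        intro x k hx
        exact hlink x k (List.mem_of_mem_dropLast hx)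
    · push Not at hvis
      obtain ⟨z, r, hs, -, hG⟩ := run_inv ρ t v v (fun y _ k => k = t.length → v <+: y) a b
        List.prefix_rfl
        (by
          intro y x k hy hk
          have := hlink x k (hy.subset (by simp))
          omega)
        (by intro y x n hn h; exact hn (by omega)) hstk (by omega) hwidth hvis (b - 1)
        (by omega) (by omega)
      have hb1 : b - 1 + 1 = b := by omega
      rcases drop_step ρ (i := b - 1) (by omega) t (z :: r) (by simp) hs
        (by rw [hb1, hbt]) with ⟨ho, _⟩ | ⟨ho, y, x, k, hmem, htop, h1, h2, h3⟩
      · exact RetSeg.pop2 hsh ho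
      · refine RetSeg.collapse hsh ho ⟨v, _, by rw [hstk]; simp [top2], htop, ?_⟩
        rw [hb1, hbt] at h3
        have hk : k = t.length := by
          have := congrArg List.length h3
          simp at this
          omega
        have hy := hG _ hmem y x k List.prefix_rfl hk
        refine ⟨hy.trans (List.prefix_append _ _), ?_⟩
        rintro rfl
        have := hy.length_le
        simp at this

/-- Links in the `i`-th word of a stack are at most `i`. -/
theorem isStack_links {bot : A} {s : Stack2 A} (h : IsStack bot s) :
    s ≠ [] ∧ ∀ t w r, s = t ++ w :: r → ∀ x k, (Sum.inr (x, k) : Letter A) ∈ w →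
      k ≤ t.length := by
  induction h with
  | base =>
    refine ⟨by simp [bottom2], ?_⟩
    intro t w r h x k hk
    cases t with
    | nil =>
      simp [bottom2] at h
      rw [← h.1] at hk
      simp at hk
    | cons a t => simp [bottom2] at h
  | @step s u op _ hop ih =>
    obtain ⟨hne, ih⟩ := ih
    obtain ⟨s0, v, rfl⟩ := exists_top s hne
    have key : ∀ v', (∀ x k, (Sum.inr (x, k) : Letter A) ∈ v' → k ≤ s0.length) →
        u = s0 ++ [v'] → u ≠ [] ∧ ∀ t w r, u = t ++ w :: r →
          ∀ x k, (Sum.inr (x, k) : Letter A) ∈ w → k ≤ t.length := by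
      intro v' hv' hu
      refine ⟨by simp [hu], ?_⟩
      intro t w r h x k hk
      rw [hu] at h
      rcases List.eq_nil_or_concat r with rfl | ⟨r', l, rfl⟩
      · have := List.append_inj' h (by simp)
        simp at this
        obtain ⟨rfl, rfl⟩ := this
        exact hv' x k hk
      · have h' : s0 ++ [v'] = (t ++ w :: r') ++ [l] := by simpa using h
        have := List.append_inj' h' (by simp)
        exact ih t w (r' ++ [v]) (by simp [this.1]) x k hk
    have hv : ∀ x k, (Sum.inr (x, k) : Letter A) ∈ v → k ≤ s0.length :=
      fun x k => ih s0 v [] rfl x k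
    rcases step_cases _ _ _ _ _ hop with ⟨_, h⟩ | ⟨e, h⟩ | ⟨e, h⟩ | ⟨h1, h, _⟩ | ⟨ho, h1, h⟩ |
      ⟨ho, _, y, e, k, hx, hk, h⟩
    · refine ⟨by simp [h], ?_⟩
      intro t w r hu x k hk
      rw [h] at hu
      rcases List.eq_nil_or_concat r with rfl | ⟨r', l, rfl⟩
      · have := List.append_inj' hu (by simp)
        simp at this
        obtain ⟨h3, h2⟩ := this
        have := hv x k (h2 ▸ hk)
        rw [← h3]
        simp
        omega
      · have h' : s0 ++ [v] ++ [v] = (t ++ w :: r') ++ [l] := by simpa using hu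
        have := List.append_inj' h' (by simp)
        exact ih t w r' this.1 x k hk
    · exact key _ (by intro x k hx; exact hv x k (by simpa using hx)) h
    · refine key _ ?_ h
      intro x k hx
      simp at hx
      rcases hx with hx | hx
      · exact hv x k hx
      · omega
    · exact key _ (by intro x k hx; exact hv x k (List.mem_of_mem_dropLast hx)) h
    · rw [h]
      refine ⟨h1, ?_⟩
      intro t w r hu
      exact ih t w (r ++ [v]) (by rw [hu]; simp)
    · have hsp : u ++ (s0 ++ [v]).drop k = s0 ++ [v] := by rw [h]; exact List.take_append_drop _ _
      refine ⟨?_, ?_⟩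
      · rw [h]
        intro h0
        have := congrArg List.length h0
        simp at this
        omega
      · intro t w r hu
        refine ih t w (r ++ (s0 ++ [v]).drop k) ?_
        have h2 : s0 ++ [v] = (t ++ w :: r) ++ (s0 ++ [v]).drop k := by
          rw [← hu]; exact hsp.symm
        simpa using h2

/-- One block of the decomposition. -/
def Blk {S : CPS Q A Γ} (ρ : Run S) (w : Word A) (j i j' : ℕ) : Prop :=
  (j ≤ i ∧ i < j') ∧ (∀ m, j ≤ m → m ≤ i → StackPrefix (ρ.stk 0) (ρ.stk m)) ∧
  (1 < w.length ∧ top2 (ρ.stk (i + 1)) = some w.dropLast ∧ RetSeg ρ (i + 1) j') ∧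
  (top2 (ρ.stk i) = top2 (ρ.stk 0) ∧
    (ρ.op i = Op.pop1 ∨ (ρ.op i = Op.collapse ∧ lvlS (ρ.stk i) = some 1)))

/-- The last condition of the decomposition. -/
def Fin4 {S : CPS Q A Γ} (ρ : Run S) (w : Word A) : Prop :=
  ((∃ w', top2 (ρ.stk (ρ.len - 1)) = some w' ∧ w <+: w' ∧ w ≠ w' ∧
        ρ.op (ρ.len - 1) = Op.collapse ∧ lvlS (ρ.stk (ρ.len - 1)) = some 2) ∨
      (∃ w', top2 (ρ.stk (ρ.len - 1)) = some w' ∧ w <+: w' ∧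
        ρ.op (ρ.len - 1) = Op.pop2))

theorem retDecomp_iff {S : CPS Q A Γ} (ρ : Run S) (w : Word A) (hw : top2 (ρ.stk 0) = some w)
    (n : ℕ) (ii jj : ℕ → ℕ) :
    RetDecomp ρ n ii jj ↔ jj 0 = 0 ∧ ii (n + 1) = ρ.len - 1 ∧ jj n ≤ ρ.len - 1 ∧
      (∀ m, jj n ≤ m → m ≤ ρ.len - 1 → StackPrefix (ρ.stk 0) (ρ.stk m)) ∧
      (∀ k, k < n → Blk ρ w (jj k) (ii (k + 1)) (jj (k + 1))) ∧ Fin4 ρ w := by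
  constructor
  · rintro ⟨h1, h2, h3, h4, h5, h6, h7, h8⟩
    refine ⟨h1, h2, h2 ▸ h4, ?_, ?_, h8 w hw⟩
    · rw [← h2]
      exact h5 (n + 1) (by omega) le_rfl
    · intro k hk
      exact ⟨h3 (k + 1) (by omega) (by omega), h5 (k + 1) (by omega) (by omega),
        h6 (k + 1) (by omega) (by omega) w hw, h7 (k + 1) (by omega) (by omega)⟩
  · rintro ⟨h1, h2, h3, h4, h5, h6⟩
    refine ⟨h1, h2, ?_, h2 ▸ h3, ?_, ?_, ?_, ?_⟩
    · intro k hk hk'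
      obtain ⟨k, rfl⟩ : ∃ k', k = k' + 1 := ⟨k - 1, by omega⟩
      exact (h5 k (by omega)).1
    · intro k hk hk'
      obtain ⟨k, rfl⟩ : ∃ k', k = k' + 1 := ⟨k - 1, by omega⟩
      by_cases hkn : k = n
      · subst hkn
        rw [h2]
        exact h4
      · exact (h5 k (by omega)).2.1
    · intro k hk hk' w' hw'
      obtain rfl : w = w' := by rw [hw] at hw'; exact Option.some.inj hw'
      obtain ⟨k, rfl⟩ : ∃ k', k = k' + 1 := ⟨k - 1, by omega⟩
      exact (h5 k (by omega)).2.2.1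
    · intro k hk hk'
      obtain ⟨k, rfl⟩ : ∃ k', k = k' + 1 := ⟨k - 1, by omega⟩
      exact (h5 k (by omega)).2.2.2
    · intro w' hw'
      obtain rfl : w = w' := by rw [hw] at hw'; exact Option.some.inj hw'
      exact h6

/-- After a block's pop, the prefix relation fails. -/
theorem Blk.not_prefix {S : CPS Q A Γ} {ρ : Run S} {t : Stack2 A} {w : Word A} {j i j' : ℕ}
    (h0 : ρ.stk 0 = t ++ [w]) (h : Blk ρ w j i j') :
    ¬ StackPrefix (ρ.stk 0) (ρ.stk (i + 1)) := by
  obtain ⟨_, _, ⟨hl, ht, _⟩, _⟩ := h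
  rw [h0, stackPrefix_iff]
  rintro ⟨r, hr, hs, hx⟩
  obtain ⟨r0, x, rfl⟩ := exists_top r hr
  rw [hs] at ht
  simp [top2] at ht
  have := (hx x (by simp)).length_le
  rw [ht] at this
  simp at this
  omega

theorem retSeg_unique {S : CPS Q A Γ} {ρ : Run S} {a b b' : ℕ} (h : RetSeg ρ a b)
    (h' : RetSeg ρ a b') : b = b' := by
  have h1 := h.shell
  have h2 := h'.shell
  have he : ρ.stk b = ρ.stk b' := by
    have := h1.2.2.1
    rw [h2.2.2.1] at this
    exact (Option.some.inj this).symm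
  rcases lt_trichotomy b b' with hl | hl | hl
  · exact absurd (he ▸ Substack.refl _) (h2.2.2.2 b h1.1.le hl)
  · exact hl
  · exact absurd (he ▸ Substack.refl _) (h1.2.2.2 b' h2.1.le hl)

theorem decomp_unique {S : CPS Q A Γ} (ρ : Run S) (t : Stack2 A) (w : Word A)
    (h0 : ρ.stk 0 = t ++ [w]) (n : ℕ) (ii jj : ℕ → ℕ) (h : RetDecomp ρ n ii jj)
    (n' : ℕ) (ii' jj' : ℕ → ℕ) (h' : RetDecomp ρ n' ii' jj') :
    n' = n ∧ (∀ k, 1 ≤ k → k ≤ n + 1 → ii' k = ii k) ∧ (∀ k, k ≤ n → jj' k = jj k) := by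
  have hw : top2 (ρ.stk 0) = some w := by rw [h0]; simp [top2]
  rw [retDecomp_iff ρ w hw] at h h'
  obtain ⟨a1, a2, a3, a4, a5, -⟩ := h
  obtain ⟨b1, b2, b3, b4, b5, -⟩ := h'
  have blkeq : ∀ j i j' e e', Blk ρ w j i j' → Blk ρ w j e e' → i = e ∧ j' = e' := by
    intro j i j' e e' hb hb'
    have hie : i = e := by
      rcases lt_trichotomy i e with hl | hl | hl
      · exact absurd (hb'.2.1 (i + 1) (by have := hb.1.1; omega) hl) (hb.not_prefix h0)
      · exact hl
      · exact absurd (hb.2.1 (e + 1) (by have := hb'.1.1; omega) hl) (hb'.not_prefix h0)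
    subst hie
    exact ⟨rfl, retSeg_unique hb.2.2.1.2.2 hb'.2.2.1.2.2⟩
  have main : ∀ k, k ≤ n → k ≤ n' → jj' k = jj k ∧ (1 ≤ k → ii' k = ii k) := by
    intro k
    induction k with
    | zero => intro _ _; exact ⟨by rw [a1, b1], by simp⟩
    | succ k ih =>
      intro h1 h2
      have e := (ih (by omega) (by omega)).1
      have hb := b5 k (by omega)
      rw [e] at hb
      obtain ⟨e1, e2⟩ := blkeq _ _ _ _ _ hb (a5 k (by omega))
      exact ⟨e2, fun _ => e1⟩
  -- monotonicity
  have bound : ∀ (n : ℕ) (ii jj : ℕ → ℕ), jj n ≤ ρ.len - 1 →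
      (∀ k, k < n → Blk ρ w (jj k) (ii (k + 1)) (jj (k + 1))) →
      ∀ d k, k + d = n → jj k ≤ ρ.len - 1 := by
    intro n ii jj h1 h2 d
    induction d with
    | zero => intro k hk; simp at hk; rw [hk]; exact h1
    | succ d ih =>
      intro k hk
      have h3 := ih (k + 1) (by omega)
      have h4 := (h2 k (by omega)).1
      omega
  have notlt : ∀ (n n' : ℕ) (jj ii' jj' : ℕ → ℕ), n < n' → jj' n = jj n →
      (∀ m, jj n ≤ m → m ≤ ρ.len - 1 → StackPrefix (ρ.stk 0) (ρ.stk m)) →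
      (∀ k, k < n' → Blk ρ w (jj' k) (ii' (k + 1)) (jj' (k + 1))) →
      jj' n' ≤ ρ.len - 1 → False := by
    intro n n' jj ii' jj' hnn he hp hb hl
    have h1 := hb n hnn
    have h2 := bound n' ii' jj' hl hb (n' - (n + 1)) (n + 1) (by omega)
    have h3 := h1.1
    exact h1.not_prefix h0 (hp _ (by omega) (by omega))
  have hnn : n' = n := by
    rcases lt_trichotomy n n' with hl | hl | hl
    · exact (notlt n n' jj ii' jj' hl (main n le_rfl hl.le).1 a4 b5 b3).elim
    · exact hl.symm
    · exact (notlt n' n jj' ii jj hl (main n' hl.le le_rfl).1.symm b4 a5 a3).elim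
  subst hnn
  refine ⟨rfl, ?_, fun k hk => (main k hk hk).1⟩
  intro k h1 h2
  by_cases hk : k = n' + 1
  · subst hk; rw [a2, b2]
  · exact (main k (by omega) (by omega)).2 h1

/-- Blocks up to index `n` cover `[jj 0, jj n)`. -/
theorem decomp_stacks {S : CPS Q A Γ} (ρ : Run S) (t : Stack2 A) (w : Word A)
    (h0 : ρ.stk 0 = t ++ [w]) (n : ℕ) (ii jj : ℕ → ℕ) (h : RetDecomp ρ n ii jj) :
    ∀ m, m ≤ ρ.len - 1 →
      StackPrefix (ρ.stk 0) (ρ.stk m) ∨ t.length + 1 < (ρ.stk m).length := by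
  have hw : top2 (ρ.stk 0) = some w := by rw [h0]; simp [top2]
  rw [retDecomp_iff ρ w hw] at h
  obtain ⟨a1, a2, a3, a4, a5, -⟩ := h
  have hpre : ∀ k, k ≤ n → StackPrefix (ρ.stk 0) (ρ.stk (jj k)) := by
    intro k hk
    by_cases hkn : k = n
    · subst hkn; exact a4 _ le_rfl a3
    · have hb := a5 k (by omega)
      exact hb.2.1 _ le_rfl hb.1.1
  have main : ∀ k, k ≤ n → ∀ m, m < jj k →
      StackPrefix (ρ.stk 0) (ρ.stk m) ∨ t.length + 1 < (ρ.stk m).length := by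
    intro k
    induction k with
    | zero => intro _ m hm; omega
    | succ k ih =>
      intro hk m hm
      by_cases h1 : m < jj k
      · exact ih (by omega) m h1
      have hb := a5 k (by omega)
      by_cases h2 : m ≤ ii (k + 1)
      · exact Or.inl (hb.2.1 m (by omega) h2)
      right
      have h3 := shell_width ρ _ _ hb.2.2.1.2.2.shell m (by omega) hm
      have h4 := hpre (k + 1) hk
      have h5 := h4.2.1
      rw [h0] at h5
      simp at h5
      omega
  intro m hm
  by_cases h1 : m < jj n
  · exact main n le_rfl m h1
  · exact Or.inl (a4 m (by omega) hm)

theorem decomp_exists {S : CPS Q A Γ} (ρ : Run S) (t : Stack2 A) (w : Word A)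
    (h0 : ρ.stk 0 = t ++ [w]) (hlen : ρ.stk ρ.len = t) (htne : t ≠ [])
    (hlink : ∀ x k, (Sum.inr (x, k) : Letter A) ∈ w → k ≤ t.length)
    (hwidth : ∀ c, c < ρ.len → t.length < (ρ.stk c).length)
    (hnv : 1 < w.length → ∀ c, c < ρ.len → ρ.stk c ≠ t ++ [w.dropLast])
    (hlast : ρ.op (ρ.len - 1) = Op.collapse →
      ∃ w', top2 (ρ.stk (ρ.len - 1)) = some w' ∧ w <+: w' ∧ w ≠ w') (d : ℕ) :
    ∀ j, ρ.len - j ≤ d → j < ρ.len → StackPrefix (ρ.stk 0) (ρ.stk j) →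
    ∃ (n : ℕ) (ii jj : ℕ → ℕ), jj 0 = j ∧ ii (n + 1) = ρ.len - 1 ∧ jj n ≤ ρ.len - 1 ∧
      (∀ m, jj n ≤ m → m ≤ ρ.len - 1 → StackPrefix (ρ.stk 0) (ρ.stk m)) ∧
      (∀ k, k < n → Blk ρ w (jj k) (ii (k + 1)) (jj (k + 1))) := by
  classical
  induction d with
  | zero => intro j h1 h2; omega
  | succ d ih =>
    intro j hd hj hpj
    have hex : ∃ m, j < m ∧ (m = ρ.len ∨ ¬ StackPrefix (ρ.stk 0) (ρ.stk m)) :=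
      ⟨ρ.len, hj, Or.inl rfl⟩
    obtain ⟨m, ⟨hjm, hm⟩, hmin⟩ : ∃ m, (j < m ∧ (m = ρ.len ∨
        ¬ StackPrefix (ρ.stk 0) (ρ.stk m))) ∧ ∀ c, c < m →
        ¬ (j < c ∧ (c = ρ.len ∨ ¬ StackPrefix (ρ.stk 0) (ρ.stk c))) :=
      ⟨Nat.find hex, Nat.find_spec hex, fun c hc => Nat.find_min hex hc⟩
    have hmle : m ≤ ρ.len := by
      by_contra hcon
      exact hmin ρ.len (by omega) ⟨hj, Or.inl rfl⟩
    have hpre : ∀ c, j ≤ c → c < m → StackPrefix (ρ.stk 0) (ρ.stk c) := by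
      intro c h1 h2
      rcases Nat.eq_or_lt_of_le h1 with rfl | h1
      · exact hpj
      · by_contra hcon
        exact hmin c h2 ⟨h1, Or.inr hcon⟩
    by_cases hml : m = ρ.len
    · refine ⟨0, fun _ => ρ.len - 1, fun _ => j, rfl, rfl, by simp; omega, ?_, by simp⟩
      intro c h1 h2
      exact hpre c h1 (by omega)
    have hm' : ¬ StackPrefix (ρ.stk 0) (ρ.stk m) := by tauto
    obtain ⟨i, rfl⟩ : ∃ i, m = i + 1 := ⟨m - 1, by omega⟩
    have hpi := hpre i (by omega) (by omega)
    have hpi0 := hpi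
    rw [h0, stackPrefix_iff] at hpi hm'
    obtain ⟨r, hr, hs, hx⟩ := hpi
    obtain ⟨r0, x, rfl⟩ := exists_top r hr
    have hst := run_step ρ (i := i) (by omega)
    rw [hs, ← List.append_assoc] at hst
    have hwi := hwidth (i + 1) (by omega)
    have hxw : w <+: x := hx x (by simp)
    have hx0 : ∀ y ∈ r0, w <+: y := fun y hy => hx y (by simp [hy])
    have key : ∀ x', ρ.stk (i + 1) = t ++ r0 ++ [x'] → ¬ w <+: x' := by
      intro x' h1 h2
      apply hm'
      refine ⟨r0 ++ [x'], by simp, by simpa using h1, ?_⟩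
      intro y hy
      rcases List.mem_append.1 hy with hy | hy
      · exact hx0 y hy
      · simp at hy; subst hy; exact h2
    have hcut : ∀ k, ρ.stk (i + 1) ≠ (t ++ (r0 ++ [x])).take k := by
      intro k hk
      rw [hk] at hwi
      simp at hwi
      apply hm'
      refine ⟨(r0 ++ [x]).take (k - t.length), ?_, ?_, ?_⟩
      · intro h0
        have := congrArg List.length h0
        simp at this
        omega
      · rw [hk, List.take_append, List.take_of_length_le (by omega)]
      · intro y hy
        exact hx y (List.mem_of_mem_take hy)
    rcases step_cases _ _ _ _ _ hst with ⟨_, h⟩ | ⟨e, h⟩ | ⟨e, h⟩ | ⟨hx1, h, hop⟩ |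
      ⟨ho, h1, h⟩ | ⟨ho, _, y, e, k, hx, hk, h⟩
    · exfalso
      apply hm'
      refine ⟨r0 ++ [x] ++ [x], by simp, by simpa using h, ?_⟩
      intro y hy
      exact hx y (by simpa using hy)
    · exact (key _ h (hxw.trans (List.prefix_append _ _))).elim
    · exact (key _ h (hxw.trans (List.prefix_append _ _))).elim
    rotate_left
    · refine (hcut (t.length + r0.length) ?_).elim
      rw [h, ← List.append_assoc, List.take_append_of_le_length (by simp),
        List.take_of_length_le (by simp)]
    · exact (hcut k (by rw [h, List.append_assoc])).elim
    have hxeq : x = w := by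
      by_contra hne
      exact key _ h (prefix_dropLast_of_ne hxw hne)
    subst hxeq
    have hr0 : r0 ≠ [] := by
      rintro rfl
      exact hnv hx1 (i + 1) (by omega) (by simpa using h)
    have hr0l : 0 < r0.length := List.length_pos_iff.2 hr0
    -- the first later drop of the width
    have hex2 : ∃ b, i + 1 < b ∧ (ρ.stk b).length ≤ (t ++ r0).length :=
      ⟨ρ.len, by omega, by rw [hlen]; simp⟩
    obtain ⟨b, ⟨hib, hbl⟩, hbmin⟩ : ∃ b, (i + 1 < b ∧ (ρ.stk b).length ≤ (t ++ r0).length) ∧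
        ∀ c, c < b → ¬ (i + 1 < c ∧ (ρ.stk c).length ≤ (t ++ r0).length) :=
      ⟨Nat.find hex2, Nat.find_spec hex2, fun c hc => Nat.find_min hex2 hc⟩
    have hble : b ≤ ρ.len := by
      by_contra hcon
      exact hbmin ρ.len (by omega) ⟨by omega, by rw [hlen]; simp⟩
    have hwid : ∀ c, i + 1 ≤ c → c < b → (t ++ r0).length < (ρ.stk c).length := by
      intro c h1 h2
      rcases Nat.eq_or_lt_of_le h1 with rfl | h1
      · rw [h]; simp
      · by_contra hcon
        exact hbmin c h2 ⟨h1, by omega⟩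
    obtain ⟨z, r, hsb, -, hG⟩ := run_inv ρ (t ++ r0) x.dropLast []
      (fun y a k => (y ++ [Sum.inr (a, k)]) <+: x.dropLast ∨ (t ++ r0).length ≤ k) (i + 1) b
      List.nil_prefix (fun y a k hy => Or.inl hy) (fun y a n _ => Or.inr (by omega)) h
      (by omega) hwid (by simp) (b - 1) (by omega) (by omega)
    have hb1 : b - 1 + 1 = b := by omega
    have hbT : ρ.stk b = t ++ r0 := by
      rcases drop_step ρ (i := b - 1) (by omega) (t ++ r0) (z :: r) (by simp) hsb
        (by rw [hb1]; exact hbl) with ⟨_, h1, _⟩ | ⟨ho, y, a, k, hmem, htop, hk0, hk1, hk2⟩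
      · rw [hb1] at h1; exact h1
      · rw [hb1] at hk2
        rcases hG _ hmem y a k List.prefix_rfl with hp | hp
        · exfalso
          have hkt := hlink a k (List.mem_of_mem_dropLast (hp.subset (by simp)))
          have hbe : b = ρ.len := by
            by_contra hne
            have := hwidth b (by omega)
            rw [hk2] at this
            simp at this
            omega
          subst hbe
          obtain ⟨w', hw1, hw2, -⟩ := hlast ho
          rw [htop] at hw1
          obtain rfl := Option.some.inj hw1
          have := (hw2.trans hp).length_le
          simp at this
          omega
        · rw [hk2, List.take_of_length_le hp]
    have hblt : b < ρ.len := by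
      rcases Nat.eq_or_lt_of_le hble with h1 | h1
      · rw [h1, hlen] at hbT
        have := congrArg List.length hbT
        rw [List.length_append] at this
        omega
      · exact h1
    have hret : RetSeg ρ (i + 1) b := by
      refine retSeg_of ρ (t ++ r0) b hble (by simp [hr0]) hbT _ x.dropLast (i + 1) rfl h hib
        hwid ?_
      intro a k hk
      have := hlink a k (List.mem_of_mem_dropLast hk)
      simp
      omega
    have hpb : StackPrefix (ρ.stk 0) (ρ.stk b) := by
      rw [h0, stackPrefix_iff]
      exact ⟨r0, hr0, hbT, hx0⟩
    obtain ⟨n, ii, jj, c1, c2, c3, c4, c5⟩ := ih b (by omega) hblt hpb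
    refine ⟨n + 1, fun k => match k with | 0 => 0 | 1 => i | k + 2 => ii (k + 1),
      fun k => match k with | 0 => j | k + 1 => jj k, rfl, c2, c3, c4, ?_⟩
    intro k hk
    match k with
    | 0 =>
      simp only [c1]
      refine ⟨⟨by omega, by omega⟩, fun c h1 h2 => hpre c h1 (by omega), ⟨hx1, ?_, hret⟩, ?_, ?_⟩
      · rw [h]; simp [top2]
      · rw [hs, h0]; simp [top2]
      · rw [hs, ← List.append_assoc]; exact hop
    | k + 1 => exact c5 k (by omega)

/-- A run starting at `s` is a return from `s` to `Pop₂(s)` not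
passing `Pop₁(s)` iff it is in `Runs(s,Pop₂(s))` and admits a uniquely determined
decomposition as in `RetDecomp`. -/
theorem return_decomposition_unique
    {Q A Γ : Type} [DecidableEq A] (S : CPS Q A Γ)
    (s : Stack2 A) (hs : IsStack S.bot s) (ρ : Run S) (h0 : ρ.stk 0 = s) :
    (RetSeg ρ 0 ρ.len ∧ ∀ i, i ≤ ρ.len → ∀ t, pop1 s = some t → ρ.stk i ≠ t) ↔
    ((∃ s', pop2 s = some s' ∧ ρ.stk ρ.len = s') ∧
      ∃ (n : ℕ) (ii jj : ℕ → ℕ), RetDecomp ρ n ii jj ∧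
        ∀ (n' : ℕ) (ii' jj' : ℕ → ℕ), RetDecomp ρ n' ii' jj' →
          n' = n ∧ (∀ k, 1 ≤ k → k ≤ n + 1 → ii' k = ii k) ∧
            (∀ k, k ≤ n → jj' k = jj k)) := by
  subst h0
  constructor
  · rintro ⟨hret, hnp⟩
    have hsh := hret.shell
    obtain ⟨hl, -, hp, -⟩ := hsh
    obtain ⟨w, hw, htne⟩ := pop2_eq hp
    refine ⟨⟨_, hp, rfl⟩, ?_⟩
    have hlink := fun x k => (isStack_links hs).2 _ w [] hw x k
    have hwidth := fun c hc => shell_width ρ _ _ hret.shell c (Nat.zero_le c) hc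
    have hpop : 1 < w.length → pop1 (ρ.stk 0) = some (ρ.stk ρ.len ++ [w.dropLast]) := by
      intro h
      rw [hw]
      simp [pop1, h]
    have hnv : 1 < w.length → ∀ c, c < ρ.len → ρ.stk c ≠ ρ.stk ρ.len ++ [w.dropLast] :=
      fun h c hc => hnp c hc.le _ (hpop h)
    have htop : top2 (ρ.stk 0) = some w := by rw [hw]; simp [top2]
    have hcases : ρ.op (ρ.len - 1) = Op.pop2 ∨ (ρ.op (ρ.len - 1) = Op.collapse ∧
        ∃ w', top2 (ρ.stk (ρ.len - 1)) = some w' ∧ w <+: w' ∧ w ≠ w') := by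
      cases hret with
      | pop2 h hop => exact Or.inl hop
      | collapse h hop hpre =>
        obtain ⟨v, w', h1, h2, h3⟩ := hpre
        rw [htop] at h1
        obtain rfl := Option.some.inj h1
        exact Or.inr ⟨hop, w', h2, h3⟩
      | sub h hik hkj hpop hret => exact absurd rfl (hnp _ hkj _ hpop)
    have hlast : ρ.op (ρ.len - 1) = Op.collapse →
        ∃ w', top2 (ρ.stk (ρ.len - 1)) = some w' ∧ w <+: w' ∧ w ≠ w' := by
      intro h
      rcases hcases with h' | h'
      · rw [h] at h'; simp at h'
      · exact h'.2
    have hp0 : StackPrefix (ρ.stk 0) (ρ.stk 0) := by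
      conv_lhs => rw [hw]
      rw [stackPrefix_iff]
      exact ⟨[w], by simp, hw, by simp⟩
    obtain ⟨n, ii, jj, c1, c2, c3, c4, c5⟩ := decomp_exists ρ _ w hw rfl htne hlink hwidth hnv
      hlast ρ.len 0 (by omega) hl hp0
    have hdec : RetDecomp ρ n ii jj := by
      rw [retDecomp_iff ρ w htop]
      refine ⟨c1, c2, c3, c4, c5, ?_⟩
      have hpl := c4 (ρ.len - 1) c3 le_rfl
      rw [hw, stackPrefix_iff] at hpl
      obtain ⟨r, hr, hs1, hx⟩ := hpl
      obtain ⟨r0, x, rfl⟩ := exists_top r hr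
      rcases hcases with h' | ⟨h', w', h1, h2, h3⟩
      · right
        exact ⟨x, by rw [hs1]; simp [top2], hx x (by simp), h'⟩
      · left
        refine ⟨w', h1, h2, h3, h', ?_⟩
        have hl1 : ρ.len - 1 + 1 = ρ.len := by omega
        rcases drop_step ρ (i := ρ.len - 1) (by omega) (ρ.stk ρ.len) _ hr hs1
          (by rw [hl1]) with ⟨ho, _⟩ | ⟨ho, y, a, k, hmem, htop', _⟩
        · rw [h'] at ho; simp at ho
        · simp only [top2] at htop'
          simp [lvlS, top1, htop', lvlOf]
    exact ⟨n, ii, jj, hdec, fun n' ii' jj' h' => decomp_unique ρ _ w hw n ii jj hdec n' ii' jj' h'⟩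
  · rintro ⟨⟨s', hp, hs'⟩, n, ii, jj, hdec, -⟩
    rw [← hs'] at hp
    obtain ⟨w, hw, htne⟩ := pop2_eq hp
    have htop : top2 (ρ.stk 0) = some w := by rw [hw]; simp [top2]
    have hstk := decomp_stacks ρ _ w hw n ii jj hdec
    have hl : 0 < ρ.len := by
      rcases Nat.eq_zero_or_pos ρ.len with h | h
      · rw [h] at hw
        have := congrArg List.length hw
        simp at this
      · exact h
    have hsh : RetShell ρ 0 ρ.len := by
      refine ⟨hl, le_rfl, hp, ?_⟩
      intro k _ hk hsub
      have h1 := hsub.length_le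
      rcases hstk k (by omega) with h2 | h2
      · have h3 := h2.2.1
        rw [hw] at h3
        simp at h3
        omega
      · omega
    rw [retDecomp_iff ρ w htop] at hdec
    obtain ⟨-, -, -, -, -, h4⟩ := hdec
    refine ⟨?_, ?_⟩
    · rcases h4 with ⟨w', h1, h2, h3, h4, -⟩ | ⟨w', _, _, h4⟩
      · exact RetSeg.collapse hsh h4 ⟨w, w', htop, h1, h2, h3⟩
      · exact RetSeg.pop2 hsh h4
    · rintro i hi u hu rfl
      rw [hw] at hu
      simp [pop1] at hu
      obtain ⟨h1, h2⟩ := hu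
      have hlen2 := congrArg List.length h2
      simp at hlen2
      by_cases hil : i = ρ.len
      · subst hil; omega
      rcases hstk i (by omega) with h3 | h3
      · rw [hw, stackPrefix_iff] at h3
        obtain ⟨r, hr, hs1, hx⟩ := h3
        rw [← h2] at hs1
        have := List.append_cancel_left hs1
        subst this
        have := (hx w.dropLast (by simp)).length_le
        simp at this
        omega
      · omega

end CPG
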